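/- arXiv:1311.6021 — 2 statements merged into one kernel-verified Lean document; each statement's English description precedes it below -/
import Mathlib

section
/- Suppose u ∈ RI(ℝ^m) and f : ℝ^m → ℝ is a bounded function such that the set E := {p ∈ ℝ^m : u(p) ≠ f(p)} is a very small subset of ℝ^m. Then f ∈ RI(ℝ^m) and ∫_{ℝ^m} f = ∫_{ℝ^m} u. -/
/-!
Cover the set `E` where `u` and `f` differ by finitely many dyadic cubes of total volume less than
`δ`. Once `k` exceeds the levels of these cubes, each of them is a union of level-`k` cubes, so the
level-`k` cubes that meet `E` have total volume less than `δ` as well. On every other level-`k` cube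
`u` and `f` have the same supremum, and suprema are bounded by the bounds `A` of `f` and `B` of `u`,
so `|U_k(f) - U_k(u)| ≤ (A + B) δ`. Lower sums follow from `L_k(f) = -U_k(-f)`.
-/

open Filter Topology

noncomputable section

/-- The dyadic cube in `D_k(ℝ^m)` indexed by `n : Fin m → ℤ`:
the product over `j` of the intervals `[n j * 2⁻ᵏ, (n j + 1) * 2⁻ᵏ)`. -/
def dyadicCube (m k : ℕ) (n : Fin m → ℤ) : Set (Fin m → ℝ) :=
  {p | ∀ j, (n j : ℝ) * (2 : ℝ) ^ (-(k : ℤ)) ≤ p j ∧ p j < ((n j : ℝ) + 1) * (2 : ℝ) ^ (-(k : ℤ))}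

/-- `BB (ℝ^m)`: bounded functions vanishing outside a bounded set. -/
def BB (m : ℕ) (f : (Fin m → ℝ) → ℝ) : Prop :=
  (∃ M : ℝ, ∀ p, |f p| ≤ M) ∧ (∃ R : ℝ, ∀ p, f p ≠ 0 → ∀ j, |p j| ≤ R)

/-- The upper sum `U_k(f) = 2^{-km} ∑_{I ∈ D_k(ℝ^m)} sup_{p ∈ I} f(p)`. -/
def U (m : ℕ) (f : (Fin m → ℝ) → ℝ) (k : ℕ) : ℝ :=
  (2 : ℝ) ^ (-(k * m : ℤ)) * ∑ᶠ n : Fin m → ℤ, sSup (f '' dyadicCube m k n)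

/-- The lower sum `L_k(f) = 2^{-km} ∑_{I ∈ D_k(ℝ^m)} inf_{p ∈ I} f(p)`. -/
def L (m : ℕ) (f : (Fin m → ℝ) → ℝ) (k : ℕ) : ℝ :=
  (2 : ℝ) ^ (-(k * m : ℤ)) * ∑ᶠ n : Fin m → ℤ, sInf (f '' dyadicCube m k n)

/-- `f ∈ RI(ℝ^m)`: `f ∈ BB(ℝ^m)` and the sequences `U_k(f)` and `L_k(f)` have
a common limit. -/
def RI (m : ℕ) (f : (Fin m → ℝ) → ℝ) : Prop :=
  BB m f ∧ ∃ c : ℝ, Tendsto (U m f) atTop (𝓝 c) ∧ Tendsto (L m f) atTop (𝓝 c)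

/-- The Riemann integral `∫_{ℝ^m} f` (the common limit of `U_k(f)` and `L_k(f)`
when `f ∈ RI(ℝ^m)`). -/
def RInt (m : ℕ) (f : (Fin m → ℝ) → ℝ) : ℝ :=
  limUnder atTop (U m f)

/-- The characteristic (indicator) function `χ_E` of a set `E`. -/
def chi {α : Type*} (E : Set α) : α → ℝ := Set.indicator E fun _ => 1


/-- `E ⊆ ℝ^m` is a very small set: for each `ε > 0` it can be covered by finitely many
dyadic cubes the sum of whose volumes is less than `ε`. -/
def VerySmall (m : ℕ) (E : Set (Fin m → ℝ)) : Prop :=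
  ∀ ε > (0 : ℝ), ∃ (N : ℕ) (k : ℕ → ℕ) (c : ℕ → Fin m → ℤ),
    E ⊆ (⋃ i ∈ Finset.range N, dyadicCube m (k i) (c i)) ∧
    ∑ i ∈ Finset.range N, (2 : ℝ) ^ (-(k i * m : ℤ)) < ε

theorem abs_sSup_le {S : Set ℝ} {M : ℝ} (hM : 0 ≤ M) (hS : ∀ x ∈ S, |x| ≤ M) : |sSup S| ≤ M := by
  have h_le : ∀ x ∈ S, x ≤ M := fun x hx => (abs_le.1 (hS x hx)).2
  rcases S.eq_empty_or_nonempty with rfl | ⟨x, hx⟩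
  · simpa using hM
  · exact abs_le.2 ⟨(abs_le.1 (hS x hx)).1.trans (le_csSup ⟨M, h_le⟩ hx), Real.sSup_le h_le hM⟩

/-- The index of the dyadic cube of level `k` containing `p`. -/
def dyadicIndex {m : ℕ} (k : ℕ) (p : Fin m → ℝ) : Fin m → ℤ := fun j => ⌊p j * 2 ^ k⌋

/-- The indices of the cubes of level `l + d` into which the cube of level `l` with index `c` is
subdivided; they do not depend on `l`. -/
def dyadicSubdivision {m : ℕ} (d : ℕ) (c : Fin m → ℤ) : Finset (Fin m → ℤ) :=
  Fintype.piFinset fun j => Finset.Ico (c j * 2 ^ d) ((c j + 1) * 2 ^ d)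

section

variable {m : ℕ}

theorem mem_dyadicCube_iff {k : ℕ} {n : Fin m → ℤ} {p : Fin m → ℝ} :
    p ∈ dyadicCube m k n ↔ dyadicIndex k p = n := by
  have h_pos : (0 : ℝ) < 2 ^ k := by positivity
  simp only [dyadicCube, dyadicIndex, Set.mem_ofPred_eq, funext_iff, Int.floor_eq_iff, zpow_neg,
    zpow_natCast, ← div_eq_mul_inv, div_le_iff₀ h_pos, lt_div_iff₀ h_pos]

theorem monotone_dyadicIndex (k : ℕ) : Monotone (dyadicIndex (m := m) k) := fun _ _ h j =>
  Int.floor_le_floor (mul_le_mul_of_nonneg_right (h j) (by positivity))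

theorem finite_image_dyadicIndex {s : Set (Fin m → ℝ)} (hs : Bornology.IsBounded s) (k : ℕ) :
    (dyadicIndex k '' s).Finite :=
  ((monotone_dyadicIndex k).map_bddBelow hs.bddBelow).finite_of_bddAbove
    ((monotone_dyadicIndex k).map_bddAbove hs.bddAbove)

theorem isBounded_dyadicCube (k : ℕ) (n : Fin m → ℤ) : Bornology.IsBounded (dyadicCube m k n) :=
  (Metric.isBounded_Icc (fun j => (n j : ℝ) * 2 ^ (-(k : ℤ)))
    (fun j => ((n j : ℝ) + 1) * 2 ^ (-(k : ℤ)))).subset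
    fun _ hp => ⟨fun j => (hp j).1, fun j => (hp j).2.le⟩

theorem mem_dyadicSubdivision {d : ℕ} {c n : Fin m → ℤ} :
    n ∈ dyadicSubdivision d c ↔ ∀ j, n j / 2 ^ d = c j := by
  have h_pos : (0 : ℤ) < 2 ^ d := by positivity
  simp only [dyadicSubdivision, Fintype.mem_piFinset, Finset.mem_Ico]
  refine forall_congr' fun j => ?_
  rw [← Int.le_ediv_iff_mul_le h_pos, ← Int.ediv_lt_iff_lt_mul h_pos]
  lia

theorem dyadicIndex_mem_dyadicSubdivision {l k : ℕ} (hlk : l ≤ k) (p : Fin m → ℝ) :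
    dyadicIndex k p ∈ dyadicSubdivision (k - l) (dyadicIndex l p) := by
  refine mem_dyadicSubdivision.2 fun j => ?_
  have h_scale : p j * 2 ^ k = p j * 2 ^ l * (2 ^ (k - l) : ℕ) := by
    rw [Nat.cast_pow, Nat.cast_ofNat, mul_assoc, ← pow_add, Nat.add_sub_cancel' hlk]
  simpa [dyadicIndex, h_scale] using
    Int.mul_natCast_floor_div_cancel (pow_ne_zero (k - l) two_ne_zero) (p j * 2 ^ l)

theorem card_dyadicSubdivision (d : ℕ) (c : Fin m → ℤ) :
    (dyadicSubdivision d c).card = 2 ^ (d * m) := by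
  have h_length : ∀ j, ((c j + 1) * 2 ^ d - c j * 2 ^ d).toNat = 2 ^ d := fun j => by
    rw [add_one_mul, add_sub_cancel_left]
    exact Int.toNat_natCast (2 ^ d)
  simp [dyadicSubdivision, h_length, pow_mul]

theorem volume_mul_card_dyadicSubdivision {l k : ℕ} (hlk : l ≤ k) (c : Fin m → ℤ) :
    (2 : ℝ) ^ (-(k * m : ℤ)) * (dyadicSubdivision (k - l) c).card = 2 ^ (-(l * m : ℤ)) := by
  rw [card_dyadicSubdivision, Nat.cast_pow, Nat.cast_ofNat, ← zpow_natCast,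
    ← zpow_add₀ two_ne_zero]
  congr 1
  push_cast [hlk]
  ring

namespace VerySmall

theorem isBounded {E : Set (Fin m → ℝ)} (hE : VerySmall m E) : Bornology.IsBounded E := by
  obtain ⟨N, l, c, h_cover, -⟩ := hE 1 one_pos
  exact ((Bornology.isBounded_biUnion_finset _).2 fun i _ =>
    isBounded_dyadicCube (l i) (c i)).subset h_cover

theorem eventually_exists_image_dyadicIndex_subset {E : Set (Fin m → ℝ)} (hE : VerySmall m E)
    {ε : ℝ} (hε : 0 < ε) :
    ∀ᶠ k : ℕ in atTop, ∃ T : Finset (Fin m → ℤ),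
      dyadicIndex k '' E ⊆ T ∧ (2 : ℝ) ^ (-(k * m : ℤ)) * T.card < ε := by
  classical
  obtain ⟨N, l, c, h_cover, h_volume⟩ := hE ε hε
  filter_upwards [eventually_ge_atTop ((Finset.range N).sup l)] with k hk
  have h_level : ∀ i ∈ Finset.range N, l i ≤ k := fun i hi => (Finset.le_sup hi).trans hk
  refine ⟨(Finset.range N).biUnion fun i => dyadicSubdivision (k - l i) (c i), ?_, ?_⟩
  · rintro _ ⟨p, hp, rfl⟩
    obtain ⟨i, hi, hpi⟩ := Set.mem_iUnion₂.1 (h_cover hp)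
    refine Finset.mem_coe.2 (Finset.mem_biUnion.2 ⟨i, hi, ?_⟩)
    rw [← mem_dyadicCube_iff.1 hpi]
    exact dyadicIndex_mem_dyadicSubdivision (h_level i hi) p
  · calc (2 : ℝ) ^ (-(k * m : ℤ)) *
          ((Finset.range N).biUnion fun i => dyadicSubdivision (k - l i) (c i)).card
        ≤ 2 ^ (-(k * m : ℤ)) *
            ∑ i ∈ Finset.range N, ((dyadicSubdivision (k - l i) (c i)).card : ℝ) := by
          gcongr
          exact_mod_cast Finset.card_biUnion_le
      _ = ∑ i ∈ Finset.range N, 2 ^ (-(l i * m : ℤ)) := by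
          rw [Finset.mul_sum]
          exact Finset.sum_congr rfl fun i hi =>
            volume_mul_card_dyadicSubdivision (h_level i hi) (c i)
      _ < ε := h_volume

end VerySmall

variable {u f : (Fin m → ℝ) → ℝ}

theorem BB_iff : BB m f ↔ (∃ M : ℝ, ∀ p, |f p| ≤ M) ∧ Bornology.IsBounded (Function.support f) := by
  refine and_congr_right fun _ => isBounded_iff_forall_norm_le.trans ?_ |>.symm
  constructor
  · rintro ⟨R, hR⟩
    exact ⟨R, fun p hp j => (norm_le_pi_norm p j).trans (hR p hp)⟩
  · rintro ⟨R, hR⟩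
    exact ⟨max R 0, fun p hp => (pi_norm_le_iff_of_nonneg (le_max_right R 0)).2 fun j =>
      (hR p hp j).trans (le_max_left R 0)⟩

namespace BB

theorem neg (hf : BB m f) : BB m (-f) := by
  simpa [BB] using hf

theorem of_verySmall_ne (hu : BB m u) (hf : ∃ M : ℝ, ∀ p, |f p| ≤ M)
    (hE : VerySmall m {p | u p ≠ f p}) : BB m f := by
  refine BB_iff.2 ⟨hf, ((BB_iff.1 hu).2.union hE.isBounded).subset fun p hp => ?_⟩
  by_cases h : u p = f p
  · exact Or.inl (h.trans_ne hp)
  · exact Or.inr h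

end BB

theorem finite_support_sSup_image_dyadicCube (hf : Bornology.IsBounded (Function.support f))
    (k : ℕ) : (Function.support fun n => sSup (f '' dyadicCube m k n)).Finite := by
  refine (finite_image_dyadicIndex hf k).subset fun n hn => ?_
  contrapose! hn
  have h_zero : ∀ x ∈ f '' dyadicCube m k n, x = 0 := by
    rintro _ ⟨p, hp, rfl⟩
    by_contra hfp
    exact hn ⟨p, hfp, mem_dyadicCube_iff.1 hp⟩
  exact Function.notMem_support.2 <| le_antisymm
    (Real.sSup_nonpos fun x hx => (h_zero x hx).le) (Real.sSup_nonneg fun x hx => (h_zero x hx).ge)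

theorem abs_U_sub_U_le (hu : Bornology.IsBounded (Function.support u))
    (hf : Bornology.IsBounded (Function.support f)) {A B : ℝ} (hA : ∀ p, |f p| ≤ A)
    (hB : ∀ p, |u p| ≤ B) {k : ℕ} {T : Finset (Fin m → ℤ)}
    (hT : dyadicIndex k '' {p | u p ≠ f p} ⊆ T) :
    |U m f k - U m u k| ≤ (A + B) * (2 ^ (-(k * m : ℤ)) * T.card) := by
  have h_sSup_sub : ∀ n, |sSup (f '' dyadicCube m k n) - sSup (u '' dyadicCube m k n)| ≤ A + B :=
    fun n => (abs_sub _ _).trans <| add_le_add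
      (abs_sSup_le ((abs_nonneg _).trans (hA 0)) (Set.forall_mem_image.2 fun p _ => hA p))
      (abs_sSup_le ((abs_nonneg _).trans (hB 0)) (Set.forall_mem_image.2 fun p _ => hB p))
  have h_support : (Function.support fun n =>
      sSup (f '' dyadicCube m k n) - sSup (u '' dyadicCube m k n)) ⊆ T := by
    refine fun n hn => by_contra fun hnT => hn (sub_eq_zero.2 ?_)
    refine congrArg sSup (Set.image_congr fun p hp => by_contra fun hne => hnT ?_)
    exact hT ⟨p, Ne.symm hne, mem_dyadicCube_iff.1 hp⟩
  rw [U, U, ← mul_sub, ← finsum_sub_distrib (finite_support_sSup_image_dyadicCube hf k)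
    (finite_support_sSup_image_dyadicCube hu k), finsum_eq_sum_of_support_subset _ h_support,
    abs_mul, abs_of_pos (by positivity), mul_left_comm, mul_comm (A + B)]
  gcongr
  calc |∑ n ∈ T, (sSup (f '' dyadicCube m k n) - sSup (u '' dyadicCube m k n))|
      ≤ ∑ n ∈ T, |sSup (f '' dyadicCube m k n) - sSup (u '' dyadicCube m k n)| :=
        Finset.abs_sum_le_sum_abs _ _
    _ ≤ T.card • (A + B) := Finset.sum_le_card_nsmul _ _ _ fun n _ => h_sSup_sub n
    _ = T.card * (A + B) := nsmul_eq_mul _ _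

theorem tendsto_U_sub_U (hu : BB m u) (hf : BB m f) (hE : VerySmall m {p | u p ≠ f p}) :
    Tendsto (U m f - U m u) atTop (𝓝 0) := by
  obtain ⟨⟨B, hB⟩, hu_supp⟩ := BB_iff.1 hu
  obtain ⟨⟨A, hA⟩, hf_supp⟩ := BB_iff.1 hf
  have hAB : 0 ≤ A + B := add_nonneg ((abs_nonneg _).trans (hA 0)) ((abs_nonneg _).trans (hB 0))
  refine Metric.tendsto_nhds.2 fun ε hε => ?_
  obtain ⟨δ, hδ, h_lt⟩ := exists_pos_mul_lt hε (A + B)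
  filter_upwards [hE.eventually_exists_image_dyadicIndex_subset hδ] with k ⟨T, hT, h_volume⟩
  rw [Pi.sub_apply, Real.dist_eq, sub_zero]
  calc |U m f k - U m u k| ≤ (A + B) * (2 ^ (-(k * m : ℤ)) * T.card) :=
        abs_U_sub_U_le hu_supp hf_supp hA hB hT
    _ ≤ (A + B) * δ := by gcongr
    _ < ε := h_lt

theorem L_eq_neg_U_neg (f : (Fin m → ℝ) → ℝ) : L m f = -U m (-f) := by
  have h_sInf (s : Set (Fin m → ℝ)) : sInf (f '' s) = -sSup ((-f) '' s) := by
    rw [Real.sInf_def, ← Set.image_neg_eq_neg, Set.image_image]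
    rfl
  funext k
  simp only [L, U, Pi.neg_apply, h_sInf, finsum_neg_distrib, mul_neg]

theorem tendsto_L_sub_L (hu : BB m u) (hf : BB m f) (hE : VerySmall m {p | u p ≠ f p}) :
    Tendsto (L m f - L m u) atTop (𝓝 0) := by
  have h_neg : Tendsto (U m (-f) - U m (-u)) atTop (𝓝 0) :=
    tendsto_U_sub_U hu.neg hf.neg (by simpa using hE)
  rw [L_eq_neg_U_neg, L_eq_neg_U_neg, ← neg_sub', ← neg_zero]
  exact h_neg.neg

end

theorem stmt_16 (m : ℕ) (hm : 0 < m) (u f : (Fin m → ℝ) → ℝ) (hu : RI m u)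
    (hfb : ∃ M : ℝ, ∀ p, |f p| ≤ M)
    (hsmall : VerySmall m {p | u p ≠ f p}) :
    RI m f ∧ RInt m f = RInt m u := by
  have hf : BB m f := hu.1.of_verySmall_ne hfb hsmall
  obtain ⟨hu_BB, a, hUu, hLu⟩ := hu
  have hUf : Tendsto (U m f) atTop (𝓝 a) := by
    simpa using (tendsto_U_sub_U hu_BB hf hsmall).add hUu
  have hLf : Tendsto (L m f) atTop (𝓝 a) := by
    simpa using (tendsto_L_sub_L hu_BB hf hsmall).add hLu
  exact ⟨⟨hf, a, hUf, hLf⟩, hUf.limUnder_eq.trans hUu.limUnder_eq.symm⟩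

end
end

section
/- Suppose f : ℝ² → ℝ is in both RI(ℝ²) and RpI(ℝ²). Then ∫_{ℝ²} f = ∫_ℝ g_f, where g_f(x) = ∫_ℝ f(x, ·) for each x ∈ ℝ. In classical notation: the double Riemann integral of f equals the repeated integral ∫_ℝ (∫_ℝ f(x, y) dy) dx. -/
open Filter Topology

noncomputable section

/-- The dyadic interval `[n * 2⁻ᵏ, (n+1) * 2⁻ᵏ)` of `D_k(ℝ)`. -/
def dyadicIvl (k : ℕ) (n : ℤ) : Set ℝ :=
  Set.Ico ((n : ℝ) * (2 : ℝ) ^ (-(k : ℤ))) (((n : ℝ) + 1) * (2 : ℝ) ^ (-(k : ℤ)))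

/-- `BB(ℝ)`: bounded functions `ℝ → ℝ` vanishing outside a bounded set. -/
def BB1 (f : ℝ → ℝ) : Prop :=
  (∃ M : ℝ, ∀ x, |f x| ≤ M) ∧ (∃ R : ℝ, ∀ x, f x ≠ 0 → |x| ≤ R)

/-- The upper sum `U_k(f) = 2⁻ᵏ ∑_{I ∈ D_k(ℝ)} sup_{p ∈ I} f(p)`. -/
def U1 (f : ℝ → ℝ) (k : ℕ) : ℝ :=
  (2 : ℝ) ^ (-(k : ℤ)) * ∑ᶠ n : ℤ, sSup (f '' dyadicIvl k n)

/-- The lower sum `L_k(f) = 2⁻ᵏ ∑_{I ∈ D_k(ℝ)} inf_{p ∈ I} f(p)`. -/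
def L1 (f : ℝ → ℝ) (k : ℕ) : ℝ :=
  (2 : ℝ) ^ (-(k : ℤ)) * ∑ᶠ n : ℤ, sInf (f '' dyadicIvl k n)

/-- `f ∈ RI(ℝ)`: `f ∈ BB(ℝ)` and `U_k(f)` and `L_k(f)` have a common limit. -/
def RI1 (f : ℝ → ℝ) : Prop :=
  BB1 f ∧ ∃ c : ℝ, Tendsto (U1 f) atTop (𝓝 c) ∧ Tendsto (L1 f) atTop (𝓝 c)

/-- The Riemann integral `∫_ℝ f`. -/
def RInt1 (f : ℝ → ℝ) : ℝ :=
  limUnder atTop (U1 f)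

/-- The dyadic square of `D_k(ℝ²)` indexed by `(n₁, n₂) : ℤ × ℤ`. -/
def dyadicSq (k : ℕ) (n : ℤ × ℤ) : Set (ℝ × ℝ) :=
  dyadicIvl k n.1 ×ˢ dyadicIvl k n.2

/-- `BB(ℝ²)`: bounded functions `ℝ² → ℝ` vanishing outside a bounded set. -/
def BB2 (f : ℝ × ℝ → ℝ) : Prop :=
  (∃ M : ℝ, ∀ p, |f p| ≤ M) ∧ (∃ R : ℝ, ∀ p : ℝ × ℝ, f p ≠ 0 → |p.1| ≤ R ∧ |p.2| ≤ R)

/-- The upper sum `U_k(f) = 2^{-2k} ∑_{I ∈ D_k(ℝ²)} sup_{p ∈ I} f(p)`. -/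
def U2 (f : ℝ × ℝ → ℝ) (k : ℕ) : ℝ :=
  (2 : ℝ) ^ (-(2 * k : ℤ)) * ∑ᶠ n : ℤ × ℤ, sSup (f '' dyadicSq k n)

/-- The lower sum `L_k(f) = 2^{-2k} ∑_{I ∈ D_k(ℝ²)} inf_{p ∈ I} f(p)`. -/
def L2 (f : ℝ × ℝ → ℝ) (k : ℕ) : ℝ :=
  (2 : ℝ) ^ (-(2 * k : ℤ)) * ∑ᶠ n : ℤ × ℤ, sInf (f '' dyadicSq k n)

/-- `f ∈ RI(ℝ²)`: `f ∈ BB(ℝ²)` and `U_k(f)` and `L_k(f)` have a common limit. -/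
def RI2 (f : ℝ × ℝ → ℝ) : Prop :=
  BB2 f ∧ ∃ c : ℝ, Tendsto (U2 f) atTop (𝓝 c) ∧ Tendsto (L2 f) atTop (𝓝 c)

/-- The double Riemann integral `∫_{ℝ²} f`. -/
def RInt2 (f : ℝ × ℝ → ℝ) : ℝ :=
  limUnder atTop (U2 f)

/-- `f ∈ RpI(ℝ²)`: `f ∈ BB(ℝ²)`, for each `x` the function `y ↦ f (x, y)` is in `RI(ℝ)`,
and the function `g_f : x ↦ ∫_ℝ f (x, ·)` is in `RI(ℝ)`. -/
def RpI2 (f : ℝ × ℝ → ℝ) : Prop :=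
  BB2 f ∧ (∀ x : ℝ, RI1 fun y => f (x, y)) ∧ RI1 fun x => RInt1 fun y => f (x, y)

/-!
For `x ∈ I` the supremum of `f` over `I × J` dominates that of the slice `f (x, ·)` over `J`.
Summing over `J` and then over `I`, the upper sum of `f` at level `k` dominates that of any `g` for
which `g x` is at most the level-`k` upper sum of the slice at `x`; dually for lower sums. Dyadic
refinement makes upper sums decrease and lower sums increase, so the upper integral `g x` of the
slice lies between its lower and upper sums at every level. Hence `L_k f ≤ L_k g ≤ U_k g ≤ U_k f`,
and the integrability of `f` squeezes both sums of `g` to `∫ f`.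
-/

section Finsum

variable {α β M : Type*} [AddCommMonoid M]

lemma hasFiniteSupport_finsum_of_prod {F : α × β → M} (hF : F.HasFiniteSupport) :
    (fun a => ∑ᶠ b, F (a, b)).HasFiniteSupport := by
  refine (hF.image Prod.fst).subset fun a ha => ?_
  by_contra! hzero
  exact ha (finsum_eq_zero_of_forall_eq_zero fun b => not_not.1 fun hb => hzero ⟨(a, b), hb, rfl⟩)

lemma hasFiniteSupport_comp_ediv (d : ℕ) [NeZero d] {b : ℤ → M} (hb : b.HasFiniteSupport) :
    (fun m : ℤ => b (m / d)).HasFiniteSupport := by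
  refine ((hb.prod Set.finite_univ).preimage (Int.divModEquiv d).injective.injOn).subset ?_
  exact fun m hm => ⟨hm, Set.mem_univ _⟩

lemma finsum_comp_ediv (d : ℕ) [NeZero d] {b : ℤ → M} (hb : b.HasFiniteSupport) :
    ∑ᶠ m : ℤ, b (m / d) = d • ∑ᶠ n, b n := by
  have hprod : (fun p : ℤ × Fin d => b p.1).HasFiniteSupport :=
    (hb.prod Set.finite_univ).subset fun p hp => ⟨hp, Set.mem_univ _⟩
  calc ∑ᶠ m : ℤ, b (m / d) = ∑ᶠ p : ℤ × Fin d, b p.1 :=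
        finsum_comp_equiv (Int.divModEquiv d) (f := fun p => b p.1)
    _ = ∑ᶠ n, d • b n := by
        rw [finsum_curry _ hprod]
        simp only [finsum_eq_sum_of_fintype, Finset.sum_const, Finset.card_univ, Fintype.card_fin]
    _ = d • ∑ᶠ n, b n := (finsum_nsmul hb d).symm

end Finsum

section Image

variable {α ι : Type*}

lemma isBounded_image_of_abs_le {f : α → ℝ} (hf : ∃ M, ∀ x, |f x| ≤ M) (s : Set α) :
    Bornology.IsBounded (f '' s) :=
  let ⟨M, hM⟩ := hf
  isBounded_iff_forall_norm_le.2 ⟨M, Set.forall_mem_image.2 fun x _ => hM x⟩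

lemma sSup_neg_image (f : α → ℝ) (s : Set α) : sSup ((-f) '' s) = -sInf (f '' s) := by
  rw [← Real.sSup_neg, ← Set.image_neg_eq_neg, Set.image_image]
  rfl

lemma sSup_image_eq_zero {f : α → ℝ} {s : Set α} (h : ∀ x ∈ s, f x = 0) : sSup (f '' s) = 0 :=
  le_antisymm (Real.sSup_nonpos (Set.forall_mem_image.2 fun x hx => (h x hx).le))
    (Real.sSup_nonneg (Set.forall_mem_image.2 fun x hx => (h x hx).ge))

lemma hasFiniteSupport_sSup_image {f : α → ℝ} {I : ι → Set α}
    (h : {i | ∃ x ∈ I i, f x ≠ 0}.Finite) : (fun i => sSup (f '' I i)).HasFiniteSupport := by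
  refine h.subset fun i hi => ?_
  by_contra! hzero
  exact hi (sSup_image_eq_zero fun x hx => not_not.1 fun hfx => hzero ⟨x, hx, hfx⟩)

end Image

section Dyadic

lemma two_zpow_neg_eq_succ_mul_two (k : ℕ) :
    (2 : ℝ) ^ (-(k : ℤ)) = (2 : ℝ) ^ (-((k + 1 : ℕ) : ℤ)) * 2 := by
  rw [← zpow_add_one₀ two_ne_zero]
  congr 1
  push_cast
  ring

lemma mem_dyadicIvl_iff_floor_eq {k : ℕ} {n : ℤ} {x : ℝ} :
    x ∈ dyadicIvl k n ↔ ⌊x * 2 ^ k⌋ = n := by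
  rw [dyadicIvl, Set.mem_Ico, zpow_neg, zpow_natCast, ← div_eq_mul_inv, ← div_eq_mul_inv,
    div_le_iff₀ (by positivity), lt_div_iff₀ (by positivity), Int.floor_eq_iff]

lemma dyadicIvl_nonempty (k : ℕ) (n : ℤ) : (dyadicIvl k n).Nonempty :=
  Set.nonempty_Ico.2 (by gcongr; exact lt_add_one _)

lemma dyadicIvl_succ_subset (k : ℕ) (m : ℤ) :
    dyadicIvl (k + 1) m ⊆ dyadicIvl k (m / (2 : ℕ)) := by
  intro x hx
  rw [mem_dyadicIvl_iff_floor_eq] at hx ⊢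
  rw [← hx, ← Int.floor_div_natCast, pow_succ, ← mul_assoc, Nat.cast_ofNat,
    mul_div_cancel_right₀ _ two_ne_zero]

lemma finite_setOf_dyadicIvl_meets_Icc (k : ℕ) (R : ℝ) :
    {n | ∃ x ∈ dyadicIvl k n, |x| ≤ R}.Finite := by
  refine (Set.finite_Icc ⌊-R * 2 ^ k⌋ ⌊R * 2 ^ k⌋).subset ?_
  rintro n ⟨x, hx, hxR⟩
  obtain ⟨hx_lower, hx_upper⟩ := abs_le.1 hxR
  rw [← mem_dyadicIvl_iff_floor_eq.1 hx]
  exact ⟨Int.floor_mono (by gcongr), Int.floor_mono (by gcongr)⟩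

end Dyadic

section OneVariable

variable {f g : ℝ → ℝ}

lemma BB1.neg (hf : BB1 f) : BB1 (-f) := by
  simpa only [BB1, Pi.neg_apply, abs_neg, neg_ne_zero] using hf

lemma U1_neg (f : ℝ → ℝ) (k : ℕ) : U1 (-f) k = -L1 f k := by
  simp only [U1, L1, sSup_neg_image, finsum_neg_distrib, mul_neg]

lemma U1_zero (k : ℕ) : U1 0 k = 0 := by
  have hsup (n : ℤ) : sSup ((0 : ℝ → ℝ) '' dyadicIvl k n) = 0 := sSup_image_eq_zero fun _ _ => rfl
  simp only [U1, hsup, finsum_zero, mul_zero]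

lemma BB1.hasFiniteSupport_sSup (hf : BB1 f) (k : ℕ) :
    (fun n => sSup (f '' dyadicIvl k n)).HasFiniteSupport := by
  obtain ⟨R, hR⟩ := hf.2
  refine hasFiniteSupport_sSup_image ((finite_setOf_dyadicIvl_meets_Icc k R).subset ?_)
  exact fun n ⟨x, hx, hfx⟩ => ⟨x, hx, hR x hfx⟩

lemma BB1.hasFiniteSupport_sInf (hf : BB1 f) (k : ℕ) :
    (fun n => sInf (f '' dyadicIvl k n)).HasFiniteSupport := by
  simpa only [sSup_neg_image, neg_neg] using (hf.neg.hasFiniteSupport_sSup k).fun_neg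

lemma U1_mono (hf : BB1 f) (hg : BB1 g) (hfg : f ≤ g) (k : ℕ) : U1 f k ≤ U1 g k := by
  refine mul_le_mul_of_nonneg_left ?_ (by positivity)
  refine finsum_le_finsum' (hf.hasFiniteSupport_sSup k) (hg.hasFiniteSupport_sSup k) fun n => ?_
  refine csSup_le ((dyadicIvl_nonempty k n).image f) (Set.forall_mem_image.2 fun x hx => ?_)
  exact (hfg x).trans
    (le_csSup (isBounded_image_of_abs_le hg.1 _).bddAbove (Set.mem_image_of_mem g hx))

lemma BB1.L1_le_U1 (hf : BB1 f) (k : ℕ) : L1 f k ≤ U1 f k := by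
  refine mul_le_mul_of_nonneg_left ?_ (by positivity)
  refine finsum_le_finsum' (hf.hasFiniteSupport_sInf k) (hf.hasFiniteSupport_sSup k) fun n => ?_
  have hbdd := isBounded_image_of_abs_le hf.1 (dyadicIvl k n)
  exact Real.sInf_le_sSup _ hbdd.bddBelow hbdd.bddAbove

lemma BB1.antitone_U1 (hf : BB1 f) : Antitone (U1 f) := by
  refine antitone_nat_of_succ_le fun k => ?_
  have hsup := hf.hasFiniteSupport_sSup k
  have hrefine (m : ℤ) :
      sSup (f '' dyadicIvl (k + 1) m) ≤ sSup (f '' dyadicIvl k (m / (2 : ℕ))) :=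
    csSup_le_csSup (isBounded_image_of_abs_le hf.1 _).bddAbove
      ((dyadicIvl_nonempty _ _).image f) (Set.image_mono (dyadicIvl_succ_subset k m))
  rw [U1, U1, two_zpow_neg_eq_succ_mul_two k, mul_assoc]
  refine mul_le_mul_of_nonneg_left ?_ (by positivity)
  calc ∑ᶠ m, sSup (f '' dyadicIvl (k + 1) m)
      ≤ ∑ᶠ m : ℤ, sSup (f '' dyadicIvl k (m / (2 : ℕ))) :=
        finsum_le_finsum' (hf.hasFiniteSupport_sSup (k + 1)) (hasFiniteSupport_comp_ediv 2 hsup)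
          hrefine
    _ = 2 * ∑ᶠ n, sSup (f '' dyadicIvl k n) := by
        rw [finsum_comp_ediv 2 hsup, nsmul_eq_mul, Nat.cast_ofNat]

lemma BB1.monotone_L1 (hf : BB1 f) : Monotone (L1 f) := fun i j hij => by
  simpa only [U1_neg, neg_le_neg_iff] using hf.neg.antitone_U1 hij

lemma BB1.L1_le_U1_of_levels (hf : BB1 f) (i j : ℕ) : L1 f i ≤ U1 f j :=
  calc L1 f i ≤ L1 f (max i j) := hf.monotone_L1 (le_max_left i j)
    _ ≤ U1 f (max i j) := hf.L1_le_U1 _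
    _ ≤ U1 f j := hf.antitone_U1 (le_max_right i j)

lemma BB1.tendsto_U1 (hf : BB1 f) : Tendsto (U1 f) atTop (𝓝 (RInt1 f)) :=
  tendsto_nhds_limUnder ⟨_, tendsto_atTop_ciInf hf.antitone_U1
    ⟨L1 f 0, Set.forall_mem_range.2 (hf.L1_le_U1_of_levels 0)⟩⟩

lemma BB1.RInt1_le_U1 (hf : BB1 f) (k : ℕ) : RInt1 f ≤ U1 f k :=
  hf.antitone_U1.le_of_tendsto hf.tendsto_U1 k

lemma BB1.L1_le_RInt1 (hf : BB1 f) (k : ℕ) : L1 f k ≤ RInt1 f :=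
  ge_of_tendsto' hf.tendsto_U1 (hf.L1_le_U1_of_levels k)

end OneVariable

section TwoVariables

variable {f : ℝ × ℝ → ℝ} {g : ℝ → ℝ}

lemma BB2.neg (hf : BB2 f) : BB2 (-f) := by
  simpa only [BB2, Pi.neg_apply, abs_neg, neg_ne_zero] using hf

lemma U2_neg (f : ℝ × ℝ → ℝ) (k : ℕ) : U2 (-f) k = -L2 f k := by
  simp only [U2, L2, sSup_neg_image, finsum_neg_distrib, mul_neg]

lemma BB2.bb1_slice (hf : BB2 f) (x : ℝ) : BB1 fun y => f (x, y) := by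
  obtain ⟨⟨M, hM⟩, R, hR⟩ := hf
  exact ⟨⟨M, fun y => hM (x, y)⟩, R, fun y hy => (hR (x, y) hy).2⟩

lemma BB2.hasFiniteSupport_sSup (hf : BB2 f) (k : ℕ) :
    (fun n => sSup (f '' dyadicSq k n)).HasFiniteSupport := by
  obtain ⟨R, hR⟩ := hf.2
  have hfin := finite_setOf_dyadicIvl_meets_Icc k R
  refine hasFiniteSupport_sSup_image ((hfin.prod hfin).subset ?_)
  exact fun n ⟨p, hp, hfp⟩ => ⟨⟨p.1, hp.1, (hR p hfp).1⟩, p.2, hp.2, (hR p hfp).2⟩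

lemma BB2.U2_eq_iterated (hf : BB2 f) (k : ℕ) :
    U2 f k = (2 : ℝ) ^ (-(k : ℤ)) *
      ∑ᶠ n, (2 : ℝ) ^ (-(k : ℤ)) * ∑ᶠ m, sSup (f '' dyadicSq k (n, m)) := by
  have hscale : (2 : ℝ) ^ (-(2 * k : ℤ)) = (2 : ℝ) ^ (-(k : ℤ)) * (2 : ℝ) ^ (-(k : ℤ)) := by
    rw [← zpow_add₀ two_ne_zero, two_mul, neg_add]
  rw [U2, hscale, finsum_curry _ (hf.hasFiniteSupport_sSup k), mul_assoc, mul_finsum]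

lemma BB2.U1_slice_le (hf : BB2 f) {k : ℕ} {n : ℤ} {x : ℝ} (hx : x ∈ dyadicIvl k n) :
    U1 (fun y => f (x, y)) k ≤
      (2 : ℝ) ^ (-(k : ℤ)) * ∑ᶠ m, sSup (f '' dyadicSq k (n, m)) := by
  refine mul_le_mul_of_nonneg_left ?_ (by positivity)
  have hcolumn := Function.support_along_fiber_finite_of_finite _ n (hf.hasFiniteSupport_sSup k)
  refine finsum_le_finsum' ((hf.bb1_slice x).hasFiniteSupport_sSup k) hcolumn fun m => ?_
  refine csSup_le_csSup (isBounded_image_of_abs_le hf.1 _).bddAbove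
    ((dyadicIvl_nonempty k m).image _) (Set.image_subset_iff.2 fun y hy => ?_)
  exact Set.mem_image_of_mem f (Set.mk_mem_prod hx hy)

lemma BB2.U1_le_U2 (hf : BB2 f) (hg : BB1 g) {k : ℕ} (hgf : ∀ x, g x ≤ U1 (fun y => f (x, y)) k) :
    U1 g k ≤ U2 f k := by
  rw [hf.U2_eq_iterated]
  refine mul_le_mul_of_nonneg_left ?_ (by positivity)
  have hcolumns := (hasFiniteSupport_finsum_of_prod (hf.hasFiniteSupport_sSup k)).fun_comp
    (g := fun t : ℝ => (2 : ℝ) ^ (-(k : ℤ)) * t) (mul_zero _)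
  refine finsum_le_finsum' (hg.hasFiniteSupport_sSup k) hcolumns fun n => ?_
  refine csSup_le ((dyadicIvl_nonempty k n).image g) (Set.forall_mem_image.2 fun x hx => ?_)
  exact (hgf x).trans (hf.U1_slice_le hx)

lemma BB2.L2_le_L1 (hf : BB2 f) (hg : BB1 g) {k : ℕ} (hfg : ∀ x, L1 (fun y => f (x, y)) k ≤ g x) :
    L2 f k ≤ L1 g k := by
  rw [← neg_le_neg_iff, ← U1_neg, ← U2_neg]
  exact hf.neg.U1_le_U2 hg.neg fun x =>
    (neg_le_neg (hfg x)).trans_eq (U1_neg (fun y => f (x, y)) k).symm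

lemma BB2.exists_bb1_abs_le (hf : BB2 f) : ∃ h : ℝ → ℝ, BB1 h ∧ ∀ x y, |f (x, y)| ≤ h y := by
  obtain ⟨⟨M, hM⟩, R, hR⟩ := hf
  have hM_nonneg : 0 ≤ M := (abs_nonneg _).trans (hM 0)
  refine ⟨(Set.Icc (-R) R).indicator fun _ => M, ⟨⟨M, fun y => ?_⟩, R, fun y hy => ?_⟩,
    fun x y => Set.le_indicator_apply (fun _ => hM (x, y)) fun hy => ?_⟩
  · rw [abs_of_nonneg (Set.indicator_nonneg (fun _ _ => hM_nonneg) y)]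
    exact Set.indicator_le_self' (fun _ _ => hM_nonneg) y
  · have hy_mem : y ∈ Set.Icc (-R) R := Set.mem_of_indicator_ne_zero hy
    exact abs_le.2 hy_mem
  · rw [abs_nonpos_iff]
    exact not_not.1 fun hfy => hy (abs_le.1 (hR (x, y) hfy).2)

lemma BB2.bb1_of_slice_sums (hf : BB2 f) {k : ℕ} (hL : ∀ x, L1 (fun y => f (x, y)) k ≤ g x)
    (hU : ∀ x, g x ≤ U1 (fun y => f (x, y)) k) : BB1 g := by
  obtain ⟨h, hh, hfh⟩ := hf.exists_bb1_abs_le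
  obtain ⟨R, hR⟩ := hf.2
  refine ⟨⟨U1 h k, fun x => abs_le'.2 ⟨?_, ?_⟩⟩, R, fun x hgx => ?_⟩
  · exact (hU x).trans (U1_mono (hf.bb1_slice x) hh (fun y => (abs_le'.1 (hfh x y)).1) k)
  · refine (neg_le_neg (hL x)).trans ?_
    rw [← U1_neg]
    exact U1_mono (hf.bb1_slice x).neg hh (fun y => (abs_le'.1 (hfh x y)).2) k
  · by_contra hxR
    have hslice : (fun y => f (x, y)) = 0 :=
      funext fun y => not_not.1 fun hfy => hxR (hR (x, y) hfy).1
    have hL_zero : L1 0 k = 0 := by rw [← neg_eq_zero, ← U1_neg, neg_zero, U1_zero]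
    have hgx_nonneg := hL x
    have hgx_nonpos := hU x
    rw [hslice, hL_zero] at hgx_nonneg
    rw [hslice, U1_zero] at hgx_nonpos
    exact hgx (le_antisymm hgx_nonpos hgx_nonneg)

theorem RI2.ri1_and_RInt2_eq_RInt1 (hf : RI2 f) (hL : ∀ x k, L1 (fun y => f (x, y)) k ≤ g x)
    (hU : ∀ x k, g x ≤ U1 (fun y => f (x, y)) k) : RI1 g ∧ RInt2 f = RInt1 g := by
  obtain ⟨hbb, c, hU2, hL2⟩ := hf
  have hg : BB1 g := hbb.bb1_of_slice_sums (hL · 0) (hU · 0)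
  have hLL k : L2 f k ≤ L1 g k := hbb.L2_le_L1 hg (hL · k)
  have hUU k : U1 g k ≤ U2 f k := hbb.U1_le_U2 hg (hU · k)
  have hU1 : Tendsto (U1 g) atTop (𝓝 c) :=
    tendsto_of_tendsto_of_tendsto_of_le_of_le hL2 hU2 (fun k => (hLL k).trans (hg.L1_le_U1 k)) hUU
  have hL1 : Tendsto (L1 g) atTop (𝓝 c) :=
    tendsto_of_tendsto_of_tendsto_of_le_of_le hL2 hU2 hLL fun k => (hg.L1_le_U1 k).trans (hUU k)
  exact ⟨⟨hg, c, hU1, hL1⟩, hU2.limUnder_eq.trans hU1.limUnder_eq.symm⟩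

end TwoVariables

/-- Upper sums of every function in `BB(ℝ)` converge, so the inner `RInt1` is the upper integral of
the slice. -/
theorem stmt_19_general (f : ℝ × ℝ → ℝ) (hf : RI2 f) :
    (RI1 fun x => RInt1 fun y => f (x, y)) ∧
      RInt2 f = RInt1 fun x => RInt1 fun y => f (x, y) :=
  hf.ri1_and_RInt2_eq_RInt1 (fun x => (hf.1.bb1_slice x).L1_le_RInt1)
    fun x => (hf.1.bb1_slice x).RInt1_le_U1

theorem stmt_19 (f : ℝ × ℝ → ℝ) (h1 : RI2 f) (h2 : RpI2 f) :
    RInt2 f = RInt1 fun x => RInt1 fun y => f (x, y) :=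
  (stmt_19_general f h1).2

end
end
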